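/- Let B be a block with n vertices and G the graph obtained by attaching k whiskers at vertices v_1, ..., v_k. Suppose G is accessible and that for every cut vertex w of G there is a cut set of G \ {w} containing N_B(w). Let v be a cut vertex of G and let r = |N_H[v]| where H is the induced subgraph of G on {v_1, ..., v_k}. Then |N_B(v)| ≤ ⌊(n + r)/2⌋ − 2; in particular |N_B(v)| ≤ ⌊(n + k)/2⌋ − 2. -/

import Mathlib

open SimpleGraph Finset

variable {V : Type*}

/-- Number of connected components of the induced subgraph on the complement of `S`. -/
noncomputable def ncomp (G : SimpleGraph V) (S : Finset V) : ℕ :=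
  Nat.card ((G.induce {v | v ∉ S}).ConnectedComponent)

/-- `S` is a cut set of `G`. -/
def cutSet [DecidableEq V] (G : SimpleGraph V) (S : Finset V) : Prop :=
  S = ∅ ∨ ∀ i ∈ S, ncomp G (S.erase i) < ncomp G S

/-- `G` is combinatorially unmixed. -/
def unmixed [DecidableEq V] (G : SimpleGraph V) : Prop :=
  G.Connected ∧ ∀ S : Finset V, cutSet G S → ncomp G S = S.card + 1

/-- `G` is accessible. -/
def accessible [DecidableEq V] (G : SimpleGraph V) : Prop :=
  unmixed G ∧ ∀ S : Finset V, cutSet G S → S ≠ ∅ → ∃ s ∈ S, cutSet G (S.erase s)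

/-- A block: connected with no cut vertices. -/
def isBlock [DecidableEq V] (G : SimpleGraph V) : Prop :=
  G.Connected ∧ ∀ v : V, ¬ cutSet G {v}

/-- The graph obtained from `B` by attaching a whisker (pendant leaf) at each `f i`. -/
def whisker {k : ℕ} (B : SimpleGraph V) (f : Fin k → V) : SimpleGraph (V ⊕ Fin k) :=
  SimpleGraph.fromRel (fun x y => match x, y with
    | Sum.inl a, Sum.inl b => B.Adj a b
    | Sum.inl a, Sum.inr i => a = f i
    | _, _ => False)

/-- A free vertex: a vertex contained in a unique maximal clique. -/
def freeVertex (G : SimpleGraph V) (v : V) : Prop :=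
  ∃! s : Set V, v ∈ s ∧ G.IsClique s ∧ ∀ t, G.IsClique t → s ⊆ t → s = t

/-- `G` with all edges meeting `S` deleted. -/
def delG (G : SimpleGraph V) (S : Finset V) : SimpleGraph V where
  Adj a b := G.Adj a b ∧ a ∉ S ∧ b ∉ S
  symm := ⟨fun _ _ h => ⟨h.1.symm, h.2.2, h.2.1⟩⟩
  loopless := ⟨fun _ h => h.1.ne rfl⟩

/-- Reachability while avoiding `S`. -/
def rch (G : SimpleGraph V) (S : Finset V) (a b : V) : Prop := (delG G S).Reachable a b

lemma rch_induct {G : SimpleGraph V} {S : Finset V} {a : V} {P : V → Prop} (h0 : P a)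
    (hs : ∀ c d, rch G S a c → P c → G.Adj c d → c ∉ S → d ∉ S → P d) {b : V}
    (h : rch G S a b) : P b := by
  have h' := (reachable_iff_reflTransGen _ _).1 h
  induction h' with
  | refl => exact h0
  | tail h1 h2 ih =>
    have r := (reachable_iff_reflTransGen _ _).2 h1
    exact hs _ _ r (ih r) h2.1 h2.2.1 h2.2.2

lemma rch_step {G : SimpleGraph V} {S : Finset V} {a c d : V} (h : rch G S a c)
    (hcd : G.Adj c d) (hc : c ∉ S) (hd : d ∉ S) : rch G S a d :=
  Reachable.trans h (Adj.reachable (G := delG G S) ⟨hcd, hc, hd⟩)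

lemma rch_adj {G : SimpleGraph V} {S : Finset V} {c d : V} 
    (hcd : G.Adj c d) (hc : c ∉ S) (hd : d ∉ S) : rch G S c d :=
  (Adj.reachable (G := delG G S) ⟨hcd, hc, hd⟩)

lemma rch_iff {G : SimpleGraph V} {S : Finset V} (a b : {v | v ∉ S}) :
    (G.induce {v | v ∉ S}).Reachable a b ↔ rch G S a b := by
  constructor
  · intro h
    exact h.map (⟨Subtype.val, fun {x y} h => ⟨h, x.2, y.2⟩⟩ :
      (G.induce {v | v ∉ S}) →g delG G S)
  · intro h
    have : ∀ hb : (b : V) ∉ S, (G.induce {v | v ∉ S}).Reachable a ⟨b, hb⟩ := by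
      refine rch_induct (P := fun b => ∀ hb : b ∉ S,
        (G.induce {v | v ∉ S}).Reachable a ⟨b, hb⟩) ?_ ?_ h
      · intro _; exact Reachable.refl _
      · intro c d _ ih hcd hc hd _
        exact (ih hc).trans (Adj.reachable (show (G.induce {v | v ∉ S}).Adj ⟨c, hc⟩ ⟨d, hd⟩ from hcd))
    exact this b.2

lemma rch_erase [DecidableEq V] {G : SimpleGraph V} {S : Finset V} {s a b : V} (ha : a ∉ S)
    (hb : b ∉ S) (hs : s ∈ S) (h : rch G (S.erase s) a b) (hn : ¬ rch G S a b) :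
    ∃ p q, G.Adj s p ∧ G.Adj s q ∧ p ∉ S ∧ q ∉ S ∧ rch G S a p ∧ rch G S q b := by
  have key : (b ∉ S → rch G S a b ∨ 
      ∃ p q, G.Adj s p ∧ G.Adj s q ∧ p ∉ S ∧ q ∉ S ∧ rch G S a p ∧ rch G S q b) ∧
      (b = s → ∃ p, G.Adj s p ∧ p ∉ S ∧ rch G S a p) := by
    refine rch_induct (P := fun b => (b ∉ S → rch G S a b ∨ 
      ∃ p q, G.Adj s p ∧ G.Adj s q ∧ p ∉ S ∧ q ∉ S ∧ rch G S a p ∧ rch G S q b) ∧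
      (b = s → ∃ p, G.Adj s p ∧ p ∉ S ∧ rch G S a p)) ?_ ?_ h
    · exact ⟨fun _ => Or.inl (Reachable.refl _), fun h => absurd (h ▸ hs) ha⟩
    · intro c d _ ih hcd hc hd
      simp only [Finset.mem_erase, not_and_or, not_not] at hc hd
      refine ⟨fun hdS => ?_, fun hds => ?_⟩
      · rcases hc with rfl | hc
        · obtain ⟨p, hp, hpS, hap⟩ := ih.2 rfl
          exact Or.inr ⟨p, d, hp, hcd, hpS, hdS, hap, Reachable.refl _⟩
        · rcases ih.1 hc with h1 | ⟨p, q, h1, h2, h3, h4, h5, h6⟩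
          · exact Or.inl (rch_step h1 hcd hc hdS)
          · exact Or.inr ⟨p, q, h1, h2, h3, h4, h5, rch_step h6 hcd hc hdS⟩
      · subst hds
        rcases hc with rfl | hc
        · exact absurd rfl hcd.ne
        · rcases ih.1 hc with h1 | ⟨p, q, h1, h2, h3, h4, h5, h6⟩
          · exact ⟨c, hcd.symm, hc, h1⟩
          · exact ⟨p, h1, h3, h5⟩
  exact (key.1 hb).resolve_left hn

/-- map on components -/
def phi [DecidableEq V] (G : SimpleGraph V) (S : Finset V) (s : V) :
    (G.induce {v | v ∉ S}).ConnectedComponent →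
      (G.induce {v | v ∉ S.erase s}).ConnectedComponent :=
  ConnectedComponent.map ⟨fun x => ⟨x.1, fun h => x.2 (Finset.mem_of_mem_erase h)⟩, fun h => h⟩

lemma phi_surj [DecidableEq V] {G : SimpleGraph V} {S : Finset V} {s p : V} 
    (hp : G.Adj s p) (hpS : p ∉ S) : Function.Surjective (phi G S s) := by
  intro C
  induction C using ConnectedComponent.ind with
  | h c =>
    by_cases hc : c.1 = s
    · refine ⟨connectedComponentMk _ ⟨p, hpS⟩, ?_⟩
      refine ConnectedComponent.sound (Adj.reachable ?_)
      show G.Adj p c.1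
      rw [hc]; exact hp.symm
    · refine ⟨connectedComponentMk _ ⟨c.1, fun h => c.2 (Finset.mem_erase.2 ⟨hc, h⟩)⟩, rfl⟩

lemma two_of_lt [Finite V] [DecidableEq V] {G : SimpleGraph V} {S : Finset V} {s : V} (hs : s ∈ S)
    (h : ncomp G (S.erase s) < ncomp G S) :
    ∃ a b, G.Adj s a ∧ G.Adj s b ∧ a ∉ S ∧ b ∉ S ∧ ¬ rch G S a b := by
  have hni : ¬ Function.Injective (phi G S s) := fun hi =>
    absurd (Nat.card_le_card_of_injective _ hi) (not_le.2 h)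
  simp only [Function.Injective, not_forall] at hni
  obtain ⟨C, C', h1, h2⟩ := hni
  induction C using ConnectedComponent.ind with
  | h c =>
  induction C' using ConnectedComponent.ind with
  | h d =>
  have h3 : ¬ rch G S c d := fun h => h2 (ConnectedComponent.sound ((rch_iff c d).2 h))
  have h4 : rch G (S.erase s) c d := (rch_iff _ _).1 (ConnectedComponent.exact h1)
  obtain ⟨p, q, h5, h6, h7, h8, h9, h10⟩ := rch_erase c.2 d.2 hs h4 h3
  exact ⟨p, q, h5, h6, h7, h8, fun h => h3 ((Reachable.trans h9 h).trans h10)⟩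

lemma phi_eq [DecidableEq V] {G : SimpleGraph V} {S : Finset V} {s a b : V} 
    (ha : G.Adj s a) (hb : G.Adj s b) (haS : a ∉ S) (hbS : b ∉ S) :
    phi G S s (connectedComponentMk _ ⟨a, haS⟩) = phi G S s (connectedComponentMk _ ⟨b, hbS⟩) := by
  refine ConnectedComponent.sound ((rch_iff _ _).2 ?_)
  have h1 : s ∉ S.erase s := by simp
  exact Reachable.trans (rch_adj ha.symm (fun h => haS (Finset.mem_of_mem_erase h)) h1)
    (rch_adj hb h1 (fun h => hbS (Finset.mem_of_mem_erase h)))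

lemma lt_of_two [Finite V] [DecidableEq V] {G : SimpleGraph V} {S : Finset V} {s a b : V} 
    (ha : G.Adj s a) (hb : G.Adj s b) (haS : a ∉ S) (hbS : b ∉ S) (hn : ¬ rch G S a b) :
    ncomp G (S.erase s) < ncomp G S := by
  have hsur := phi_surj ha haS
  refine lt_of_le_of_ne (Nat.card_le_card_of_surjective _ hsur) fun he => ?_
  have hbij : Function.Bijective (phi G S s) :=
    (Nat.bijective_iff_surjective_and_card _).2 ⟨hsur, he.symm⟩
  exact hn ((rch_iff _ _).1 (ConnectedComponent.exact (hbij.1 (phi_eq ha hb haS hbS))))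

lemma lt_of_three [Finite V] [DecidableEq V] {G : SimpleGraph V} {S : Finset V} {s a b c : V} 
    (ha : G.Adj s a) (hb : G.Adj s b) (hc : G.Adj s c) (haS : a ∉ S) (hbS : b ∉ S) (hcS : c ∉ S)
    (hab : ¬ rch G S a b) (hac : ¬ rch G S a c) (hbc : ¬ rch G S b c) :
    ncomp G (S.erase s) + 2 ≤ ncomp G S := by
  classical
  have hsur := phi_surj ha haS
  have : Fintype V := Fintype.ofFinite V
  have : Fintype (G.induce {v | v ∉ S}).ConnectedComponent := Fintype.ofFinite _
  have : Fintype (G.induce {v | v ∉ S.erase s}).ConnectedComponent := Fintype.ofFinite _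
  set A := (G.induce {v | v ∉ S}).connectedComponentMk ⟨a, haS⟩ with hA
  set B := (G.induce {v | v ∉ S}).connectedComponentMk ⟨b, hbS⟩ with hB
  set C := (G.induce {v | v ∉ S}).connectedComponentMk ⟨c, hcS⟩ with hC
  have AB : A ≠ B := fun h => hab ((rch_iff _ _).1 (ConnectedComponent.exact h))
  have AC : A ≠ C := fun h => hac ((rch_iff _ _).1 (ConnectedComponent.exact h))
  have BC : B ≠ C := fun h => hbc ((rch_iff _ _).1 (ConnectedComponent.exact h))
  have e1 : phi G S s A = phi G S s B := phi_eq ha hb haS hbS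
  have e2 : phi G S s A = phi G S s C := phi_eq ha hc haS hcS
  have him : (Finset.univ \ {B, C}).image (phi G S s) = Finset.univ := by
    ext y
    simp only [Finset.mem_image, Finset.mem_sdiff, Finset.mem_univ, true_and, iff_true,
      Finset.mem_insert, Finset.mem_singleton, not_or]
    obtain ⟨x, rfl⟩ := hsur y
    by_cases h1 : x = B
    · exact ⟨A, ⟨AB, AC⟩, by rw [h1, e1]⟩
    by_cases h2 : x = C
    · exact ⟨A, ⟨AB, AC⟩, by rw [h2, e2]⟩
    exact ⟨x, ⟨h1, h2⟩, rfl⟩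
  have h1 := Finset.card_image_le (s := Finset.univ \ {B, C}) (f := phi G S s)
  rw [him] at h1
  have h2 := Finset.card_sdiff_add_card_eq_card (Finset.subset_univ {B, C})
  rw [Finset.card_pair BC] at h2
  simp only [ncomp, Nat.card_eq_fintype_card]
  rw [← Finset.card_univ, ← Finset.card_univ]
  omega

lemma cutSet_iff [Finite V] [DecidableEq V] {G : SimpleGraph V} {S : Finset V} :
    cutSet G S ↔ ∀ s ∈ S, ∃ a b, G.Adj s a ∧ G.Adj s b ∧ a ∉ S ∧ b ∉ S ∧ ¬ rch G S a b := by
  constructor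
  · rintro (rfl | h) s hs
    · simp at hs
    · exact two_of_lt hs (h s hs)
  · intro h
    refine Or.inr fun s hs => ?_
    obtain ⟨a, b, h1, h2, h3, h4, h5⟩ := h s hs
    exact lt_of_two h1 h2 h3 h4 h5

/-- In an unmixed graph, no three pairwise separated neighbours when both are cut sets. -/
lemma no_three [Finite V] [DecidableEq V] {G : SimpleGraph V} (hG : unmixed G) {S : Finset V}
    {s a b c : V} (hs : s ∈ S) (hS : cutSet G S) (hS' : cutSet G (S.erase s))
    (ha : G.Adj s a) (hb : G.Adj s b) (hc : G.Adj s c) (haS : a ∉ S) (hbS : b ∉ S) (hcS : c ∉ S)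
    (hab : ¬ rch G S a b) (hac : ¬ rch G S a c) (hbc : ¬ rch G S b c) : False := by
  have h1 := lt_of_three ha hb hc haS hbS hcS hab hac hbc
  rw [hG.2 _ hS, hG.2 _ hS'] at h1
  have := Finset.card_erase_add_one hs
  omega

lemma wh_ll {k : ℕ} {B : SimpleGraph V} {f : Fin k → V} {a b : V} :
    (whisker B f).Adj (Sum.inl a) (Sum.inl b) ↔ B.Adj a b := by
  simp only [whisker, fromRel_adj]
  constructor
  · rintro ⟨_, h | h⟩
    · exact h
    · exact h.symm
  · intro h
    exact ⟨fun e => h.ne (Sum.inl.inj e), Or.inl h⟩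

lemma wh_lr {k : ℕ} {B : SimpleGraph V} {f : Fin k → V} {a : V} {j : Fin k} :
    (whisker B f).Adj (Sum.inl a) (Sum.inr j) ↔ a = f j := by
  simp [whisker, fromRel_adj]

lemma wh_r {k : ℕ} {B : SimpleGraph V} {f : Fin k → V} {x : V ⊕ Fin k} {j : Fin k} :
    (whisker B f).Adj (Sum.inr j) x ↔ x = Sum.inl (f j) := by
  rcases x with a | l
  · rw [adj_comm, wh_lr]; simp
  · simp [whisker, fromRel_adj]

lemma ncomp_le [Fintype V] [DecidableEq V] {k : ℕ} (B : SimpleGraph V) (f : Fin k → V)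
    (S : Finset (V ⊕ Fin k)) :
    ncomp (whisker B f) S ≤ (Finset.univ.filter fun u : V => Sum.inl u ∉ S).card +
      (Finset.univ.filter fun j : Fin k => Sum.inl (f j) ∈ S).card := by
  classical
  set T : Finset (V ⊕ Fin k) := (Finset.univ.filter fun u : V => Sum.inl u ∉ S).disjSum
    (Finset.univ.filter fun j : Fin k => Sum.inl (f j) ∈ S) with hT
  have hc : T.card = (Finset.univ.filter fun u : V => Sum.inl u ∉ S).card +
      (Finset.univ.filter fun j : Fin k => Sum.inl (f j) ∈ S).card := Finset.card_disjSum _ _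
  rw [← hc]
  set T' := T.filter (· ∉ S) with hT'
  refine le_trans ?_ (Finset.card_filter_le T (· ∉ S))
  let g : T' → ((whisker B f).induce {v | v ∉ S}).ConnectedComponent :=
    fun x => connectedComponentMk _ ⟨x.1, (Finset.mem_filter.1 x.2).2⟩
  have hg : Function.Surjective g := by
    intro C
    induction C using ConnectedComponent.ind with
    | h c =>
    obtain ⟨c, hcS⟩ := c
    have hcS' : c ∉ S := hcS
    rcases c with u | j
    · exact ⟨⟨Sum.inl u, by simp [hT', hT, hcS']⟩, rfl⟩
    · by_cases hj : Sum.inl (f j) ∈ S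
      · exact ⟨⟨Sum.inr j, by simp [hT', hT, hcS', hj]⟩, rfl⟩
      · refine ⟨⟨Sum.inl (f j), by simp [hT', hT, hj]⟩, ?_⟩
        refine ConnectedComponent.sound (Adj.reachable ?_)
        exact (wh_lr (B := B)).2 rfl
  have := Nat.card_le_card_of_surjective g hg
  simpa [ncomp] using this

/-- component of `v` is `{v, ℓ}` once the neighbours are removed -/
lemma rch_v {k : ℕ} {B : SimpleGraph V} {f : Fin k → V} {i : Fin k}
    {S : Finset (V ⊕ Fin k)} (hN : ∀ u, B.Adj (f i) u → Sum.inl u ∈ S) {b : V ⊕ Fin k}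
    (h : rch (whisker B f) S (Sum.inl (f i)) b) (hf : Function.Injective f) :
    b = Sum.inl (f i) ∨ b = Sum.inr i := by
  refine rch_induct (P := fun b => b = Sum.inl (f i) ∨ b = Sum.inr i) (Or.inl rfl) ?_ h
  rintro c d _ (rfl | rfl) hcd _ hd
  · rcases d with u | j
    · exact absurd (hN u (wh_ll.1 hcd)) hd
    · exact Or.inr (by rw [hf (wh_lr.1 hcd)])
  · exact Or.inl (wh_r.1 hcd)

lemma rch_leaf {k : ℕ} {B : SimpleGraph V} {f : Fin k → V} {j : Fin k}
    {S : Finset (V ⊕ Fin k)} (hN : Sum.inl (f j) ∈ S) {b : V ⊕ Fin k}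
    (h : rch (whisker B f) S (Sum.inr j) b) : b = Sum.inr j := by
  refine rch_induct (P := fun b => b = Sum.inr j) rfl ?_ h
  rintro c d _ rfl hcd _ hd
  exact absurd (wh_r.1 hcd ▸ hN) hd

lemma key_lemma [Fintype V] [DecidableEq V] {k : ℕ}
    (B : SimpleGraph V) (f : Fin k → V) (hf : Function.Injective f) (i : Fin k)
    (S : Finset {x : V ⊕ Fin k // x ≠ Sum.inl (f i)})
    (hS : cutSet ((whisker B f).induce {x | x ≠ Sum.inl (f i)}) S)
    (hN : ∀ u, B.Adj (f i) u → Sum.inl u ∈ S.image Subtype.val) :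
    ∀ s ∈ S.image Subtype.val, ∃ a b, (whisker B f).Adj s a ∧ (whisker B f).Adj s b ∧
      a ∉ S.image Subtype.val ∧ b ∉ S.image Subtype.val ∧
      (a ≠ Sum.inl (f i) ∧ a ≠ Sum.inr i) ∧ (b ≠ Sum.inl (f i) ∧ b ≠ Sum.inr i) ∧
      ¬ rch (whisker B f) (S.image Subtype.val) a b := by
  intro s hs
  obtain ⟨s, hsS, rfl⟩ := Finset.mem_image.1 hs
  have hmem : ∀ x : {x : V ⊕ Fin k // x ≠ Sum.inl (f i)}, x.1 ∈ S.image Subtype.val ↔ x ∈ S := by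
    intro x
    rw [Finset.mem_image]
    exact ⟨fun ⟨y, hy, e⟩ => Subtype.ext e ▸ hy, fun h => ⟨x, h, rfl⟩⟩
  obtain ⟨a, b, ha, hb, haS, hbS, hab⟩ := cutSet_iff.1 hS s hsS
  have hne : ∀ c : {x : V ⊕ Fin k // x ≠ Sum.inl (f i)}, (whisker B f).Adj s.1 c.1 →
      c.1 ≠ Sum.inr i := by
    intro c hc e
    rw [e, adj_comm, wh_r] at hc
    exact s.2 hc
  refine ⟨a.1, b.1, ha, hb, fun h => haS ((hmem a).1 h), fun h => hbS ((hmem b).1 h),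
    ⟨a.2, hne a ha⟩, ⟨b.2, hne b hb⟩, fun hr => hab ?_⟩
  have hva : ∀ c, rch (whisker B f) (S.image Subtype.val) a.1 c → c ≠ Sum.inl (f i) := by
    rintro c hc rfl
    rcases rch_v hN (Reachable.symm hc) hf with h | h
    · exact a.2 h
    · exact hne a ha h
  have : ∃ h : b.1 ≠ Sum.inl (f i),
      rch ((whisker B f).induce {x | x ≠ Sum.inl (f i)}) S a ⟨b.1, h⟩ := by
    refine rch_induct (P := fun b => ∃ h : b ≠ Sum.inl (f i),
      rch ((whisker B f).induce {x | x ≠ Sum.inl (f i)}) S a ⟨b, h⟩) ⟨a.2, Reachable.refl _⟩ ?_ hr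
    rintro c d hac ⟨hc, ih⟩ hcd hcS hdS
    have hd := hva d (rch_step hac hcd hcS hdS)
    refine ⟨hd, rch_step ih ?_ (fun h => hcS ((hmem ⟨c, hc⟩).2 h))
      (fun h => hdS ((hmem ⟨d, hd⟩).2 h))⟩
    exact hcd
  exact this.2

theorem bound_neighbourhood [Fintype V] [DecidableEq V] {k : ℕ}
    (B : SimpleGraph V) [DecidableRel B.Adj] (hB : isBlock B)
    (f : Fin k → V) (hf : Function.Injective f)
    (hacc : accessible (whisker B f))
    (hyp : ∀ j : Fin k, ∃ S : Finset {x : V ⊕ Fin k // x ≠ Sum.inl (f j)},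
      cutSet ((whisker B f).induce {x | x ≠ Sum.inl (f j)}) S ∧
      ∀ u, B.Adj (f j) u → Sum.inl u ∈ S.image Subtype.val)
    (i : Fin k) :
    (B.neighborFinset (f i)).card ≤
      (Fintype.card V + ((Finset.univ.filter fun j : Fin k => B.Adj (f i) (f j)).card + 1)) / 2 - 2 ∧
    (B.neighborFinset (f i)).card ≤ (Fintype.card V + k) / 2 - 2 := by
  have hr : (Finset.univ.filter fun j : Fin k => B.Adj (f i) (f j)).card + 1 ≤ k := by
    have : (Finset.univ.filter fun j : Fin k => B.Adj (f i) (f j)) ⊂ Finset.univ := by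
      refine (Finset.ssubset_univ_iff).2 fun h => ?_
      have : i ∈ (Finset.univ.filter fun j : Fin k => B.Adj (f i) (f j)) := by simp [h]
      simp at this
    simpa using Finset.card_lt_card this
  suffices h : (B.neighborFinset (f i)).card = 0 ∨ 2 * (B.neighborFinset (f i)).card + 3 ≤
      Fintype.card V + (Finset.univ.filter fun j : Fin k => B.Adj (f i) (f j)).card by
    omega
  by_cases hN0 : (B.neighborFinset (f i)).card = 0
  · exact Or.inl hN0
  right
  obtain ⟨S', hS', hN⟩ := hyp i
  have key := key_lemma B f hf i S' hS' hN
  have hvS : Sum.inl (f i) ∉ S'.image Subtype.val := by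
    intro h
    obtain ⟨x, _, hx⟩ := Finset.mem_image.1 h
    exact x.2 hx
  generalize S'.image Subtype.val = S at key hN hvS
  have hunm := hacc.1
  have hcut : cutSet (whisker B f) S := cutSet_iff.2 fun s hs => by
    obtain ⟨a, b, h1, h2, h3, h4, _, _, h5⟩ := key s hs
    exact ⟨a, b, h1, h2, h3, h4, h5⟩
  set N : Finset (V ⊕ Fin k) := (B.neighborFinset (f i)).map Function.Embedding.inl with hNdef
  have hNcard : N.card = (B.neighborFinset (f i)).card := Finset.card_map _
  have memN : ∀ x, x ∈ N ↔ (whisker B f).Adj x (Sum.inl (f i)) ∧ ∃ u, x = Sum.inl u := by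
    intro x
    rcases x with u | j
    · simp [hNdef, wh_ll, adj_comm]
    · simp [hNdef]
  have hNS : N ⊆ S := by
    intro x hx
    obtain ⟨h1, u, rfl⟩ := (memN x).1 hx
    exact hN u (wh_ll.1 h1).symm
  have hNne : N.Nonempty := Finset.card_pos.1 (by omega)
  -- leaves are not in `S`
  have hleaf : ∀ j, Sum.inr j ∉ S := by
    intro j hj
    obtain ⟨a, b, h1, h2, _, _, _, _, h3⟩ := key _ hj
    rw [wh_r] at h1 h2
    exact h3 (by rw [h1, h2]; exact Reachable.refl _)
  obtain ⟨s, hsS, hcutT⟩ := hacc.2 S hcut (hNne.mono hNS).ne_empty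
  have hsN : s ∉ N := by
    intro hsN
    obtain ⟨a, b, h1, h2, h3, h4, h5, h6, h7⟩ := key s hsS
    refine no_three hunm hsS hcut hcutT ((memN s).1 hsN).1 h1 h2 hvS h3 h4 ?_ ?_ h7
    · intro h
      exact (rch_v hN h hf).elim h5.1 h5.2
    · intro h
      exact (rch_v hN h hf).elim h6.1 h6.2
  -- the case `S = N ∪ {s}` with `s` whiskered is impossible
  have himp : ∀ j, s = Sum.inl (f j) → S.erase s ≠ N := by
    intro j hj hT
    obtain ⟨x, hxN, hcutx⟩ := hacc.2 (S.erase s) hcutT (hT ▸ hNne.ne_empty)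
    have hxS := Finset.mem_of_mem_erase hxN
    have hxs : x ≠ s := Finset.ne_of_mem_erase hxN
    obtain ⟨a, b, h1, h2, h3, h4, h5, h6, h7⟩ := key x hxS
    have hNT : ∀ u, B.Adj (f i) u → Sum.inl u ∈ S.erase s := by
      intro u hu
      rw [hT]
      exact (memN _).2 ⟨wh_ll.2 hu.symm, u, rfl⟩
    have er : ∀ y, y ∉ S → y ∉ S.erase s := fun y hy h => hy (Finset.mem_of_mem_erase h)
    have hadjxv := ((memN x).1 (hT ▸ hxN)).1
    refine no_three hunm hxN hcutT hcutx hadjxv h1 h2 (er _ hvS) (er _ h3) (er _ h4) ?_ ?_ ?_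
    · intro h
      exact (rch_v hNT h hf).elim h5.1 h5.2
    · intro h
      exact (rch_v hNT h hf).elim h6.1 h6.2
    · intro hab
      obtain ⟨p, q, hp, hq, hpS, hqS, hap, hqb⟩ := rch_erase h3 h4 hsS hab h7
      have hjS : Sum.inl (f j) ∈ S := hj ▸ hsS
      have hnl : ∀ c, (whisker B f).Adj x c → ¬ rch (whisker B f) S (Sum.inr j) c := by
        intro c hc hr
        have := rch_leaf hjS hr
        rw [this, adj_comm, wh_r, ← hj] at hc
        exact hxs hc
      refine no_three hunm hsS hcut hcutT (c := Sum.inr j) hp hq ?_ hpS hqS (hleaf j) ?_ ?_ ?_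
      · rw [hj]; exact wh_lr.2 rfl
      · intro h
        exact h7 ((Reachable.trans hap h).trans hqb)
      · intro h
        exact hnl a h1 (Reachable.symm (Reachable.trans hap h))
      · intro h
        exact hnl b h2 (Reachable.trans (Reachable.symm h) hqb)
  -- counting
  have hc1 := hunm.2 S hcut
  have hc2 := ncomp_le B f S
  have hc3 : (Finset.univ.filter fun u : V => Sum.inl u ∉ S).card + S.card = Fintype.card V := by
    have h1 : S.card = (Finset.univ.filter fun u : V => Sum.inl u ∈ S).card := by
      have h0 : S = (Finset.univ.filter fun u : V => Sum.inl u ∈ S).map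
          (Function.Embedding.inl (β := Fin k)) := by
        ext x
        rcases x with u | j
        · simp
        · simp [hleaf j]
      exact (congrArg Finset.card h0).trans (Finset.card_map _)
    rw [h1, add_comm, Finset.card_filter_add_card_filter_not, Finset.card_univ]
  set D := S \ N with hD
  have hc4 : D.card + N.card = S.card := Finset.card_sdiff_add_card_eq_card hNS
  set W := Finset.univ.filter fun j : Fin k => Sum.inl (f j) ∈ D with hW
  have hc5 : (Finset.univ.filter fun j : Fin k => Sum.inl (f j) ∈ S).card =
      (Finset.univ.filter fun j : Fin k => B.Adj (f i) (f j)).card + W.card := by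
    rw [← Finset.card_union_of_disjoint]
    · congr 1
      ext j
      have := @hNS (Sum.inl (f j))
      have h2 := memN (Sum.inl (f j))
      rw [wh_ll, adj_comm] at h2
      simp only [hW, hD, Finset.mem_union, Finset.mem_filter, Finset.mem_univ, true_and,
        Finset.mem_sdiff]
      have h3 : B.Adj (f i) (f j) ↔ Sum.inl (f j) ∈ N := by rw [h2]; simp
      rw [h3]; tauto
    · rw [Finset.disjoint_left]
      intro j h1 h2
      simp only [hW, hD, Finset.mem_filter, Finset.mem_univ, true_and, Finset.mem_sdiff] at h1 h2
      exact h2.2 ((memN _).2 ⟨wh_ll.2 h1.symm, _, rfl⟩)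
  have hsD : s ∈ D := Finset.mem_sdiff.2 ⟨hsS, hsN⟩
  have hWD : W.card ≤ D.card := by
    refine Finset.card_le_card_of_injOn (fun j => Sum.inl (f j)) ?_ ?_
    · intro j hj
      simpa [hW] using hj
    · intro a _ b _ h
      exact hf (Sum.inl.inj h)
  have hfin : W.card + 2 ≤ 2 * D.card := by
    have hpos : 0 < D.card := Finset.card_pos.2 ⟨s, hsD⟩
    by_cases h1 : D.card = 1
    · obtain ⟨y, hy⟩ := Finset.card_eq_one.1 h1
      have hys : s = y := by rw [hy] at hsD; simpa using hsD
      subst hys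
      have : W.card = 0 := by
        rw [Finset.card_eq_zero, Finset.eq_empty_iff_forall_notMem]
        intro j hj
        have hjD : Sum.inl (f j) ∈ D := by simpa [hW] using hj
        rw [hy, Finset.mem_singleton] at hjD
        refine himp j hjD.symm ?_
        rw [Finset.erase_eq, ← hy, hD, Finset.sdiff_sdiff_eq_self hNS]
      omega
    · omega
  omega
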